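/- Dimension of the span of indicators of linear extensions: for every integer k with 2 ≤ k ≤ n, let V^k be the linear span in L(Γ([n])) of the indicator functions 1_{S_n(π)} of the sets S_n(π) := {σ ∈ Γ([n]) : π ⊂ σ}, where π ranges over all duplicate-free words on [n] of length k. Then dim V^k = Σ_{j=0}^{k} C(n,j)·d_j (equivalently 1 + Σ_{j=2}^{k} C(n,j)·d_j, since d_1 = 0). In particular V^n = L(Γ([n])) and V^{k-1} ⊆ V^k for 3 ≤ k ≤ n. -/

import Mathlib

open Finset
open scoped List

abbrev Word (n : ℕ) := List (Fin n)

/-- `Γ(A)`: duplicate-free words whose set of letters is exactly `A`. -/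
noncomputable def rankings (n : ℕ) (A : Finset (Fin n)) : Finset (Word n) :=
  A.toList.permutations.toFinset

/-- All duplicate-free words on `[n]`. -/
noncomputable def allWords (n : ℕ) : Finset (Word n) :=
  Finset.univ.biUnion fun A : Finset (Fin n) => rankings n A

def IsRanking {n : ℕ} (A : Finset (Fin n)) (w : Word n) : Prop :=
  w.Nodup ∧ w.toFinset = A

instance {n : ℕ} (A : Finset (Fin n)) (w : Word n) : Decidable (IsRanking A w) :=
  inferInstanceAs (Decidable (w.Nodup ∧ w.toFinset = A))

/-- Membership in `L(Γ(A))`: functions supported on `Γ(A)`. -/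
def MemL {n : ℕ} (A : Finset (Fin n)) (F : Word n → ℝ) : Prop :=
  ∀ w, F w ≠ 0 → IsRanking A w

/-- Marginal operator `M_B` (with the convention `M_∅ F = (Σ F)·δ_0̄`). -/
noncomputable def marg {n : ℕ} (B : Finset (Fin n)) (F : Word n → ℝ) : Word n → ℝ :=
  fun π => if IsRanking B π then ∑ σ ∈ allWords n, (if π <+ σ then F σ else 0) else 0

/-- Membership in the localization space `H_B` (for `B = ∅` this is `L(Γ(∅)) = ℝ·δ_0̄`). -/
def MemH {n : ℕ} (B : Finset (Fin n)) (F : Word n → ℝ) : Prop :=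
  MemL B F ∧
    (∀ B' : Finset (Fin n), B' ⊂ B → 2 ≤ B'.card → marg B' F = 0) ∧
    (2 ≤ B.card → ∑ π ∈ rankings n B, F π = 0)

/-- `P̄(A) = {B ⊆ A : |B| ≥ 2} ∪ {∅}`. -/
def Pbar {n : ℕ} (A : Finset (Fin n)) : Finset (Finset (Fin n)) :=
  A.powerset.filter fun B => 2 ≤ B.card ∨ B = ∅

/-- Synthesis operator `φ_A`. -/
noncomputable def synth {n : ℕ} (A : Finset (Fin n)) (F : Word n → ℝ) : Word n → ℝ :=
  fun σ =>
    if IsRanking A σ then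
      F [] / (Nat.factorial A.card : ℝ) +
        ∑ π ∈ allWords n,
          (if π ≠ [] ∧ π <:+: σ then F π / (Nat.factorial (A.card - π.length + 1) : ℝ) else 0)
    else 0

/-- Dirac function `δ_π`. -/
noncomputable def dirac {n : ℕ} (π : Word n) : Word n → ℝ :=
  fun w => if w = π then 1 else 0

/-- `σ|_C`: the induced word of `σ` on `C`. -/
def restrictWord {n : ℕ} (σ : Word n) (C : Finset (Fin n)) : Word n :=
  σ.filter fun a => decide (a ∈ C)

/-- Indicator function of the set of linear extensions `S_n(π) = {σ ∈ Γ([n]) : π ⊂ σ}`. -/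
noncomputable def linextInd {n : ℕ} (π : Word n) : Word n → ℝ :=
  fun σ => if IsRanking Finset.univ σ ∧ π <+ σ then 1 else 0

/-- The space `L(Γ([n]))` (functions supported on full rankings) as a submodule. -/
noncomputable def Lspace (n : ℕ) : Submodule ℝ (Word n → ℝ) where
  carrier := {F | MemL Finset.univ F}
  zero_mem' := by intro w hw; simp at hw
  add_mem' := by
    intro F G hF hG w hw
    by_contra h
    have h1 : F w = 0 := by by_contra h'; exact h (hF w h')
    have h2 : G w = 0 := by by_contra h'; exact h (hG w h')
    exact hw (by simp [h1, h2])
  smul_mem' := by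
    intro c F hF w hw
    by_contra h
    have h1 : F w = 0 := by by_contra h'; exact h (hF w h')
    exact hw (by simp [h1])

/-- `V^k`: the span of the indicators `1_{S_n(π)}` over duplicate-free words `π` of length `k`. -/
noncomputable def Vspace (n k : ℕ) : Submodule ℝ (Word n → ℝ) :=
  Submodule.span ℝ (linextInd '' {π : Word n | π.Nodup ∧ π.length = k})

/-!
Deleting a letter `b` from a ranking `π` expresses `1_{S(π∖b)}` as the sum of the `1_{S(ρ)}` over
all ways `ρ` of putting `b` back. If `π` is the lexicographically largest of these `ρ`, then
`1_{S(π)}` is a combination of indicators of shorter or lexicographically smaller words. Hence the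
indicators of the words containing no such letter span. In Foata's correspondence between words and
permutations such letters are the fixed points, so `d_j` of these words use any given `j` letters.
Their total number is `∑ j, C(n,j) d_j = n! = dim L(Γ([n]))`, so the spanning family is linearly
independent, and so is its part of length at most `k`, which spans `V^k`.
-/

section Lists

variable {α : Type*} [LinearOrder α]

/-- The letters of a duplicate-free word `w` that are smaller than all letters before them and
larger than the next letter, if there is one. They are the fixed points of the permutation that `w`
denotes in Foata's correspondence, where each cycle starts with its least element and the cycles are
listed by decreasing least element. In the encoding, `b` is taken out of `w` and put back in front
of the first letter smaller than `b`. -/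
def fixedLetters (w : List α) : Finset α :=
  {b ∈ w.toFinset | (w.erase b).orderedInsert (· > ·) b = w}

theorem orderedInsert_erase_of_mem_fixedLetters {b : α} {w : List α} (hb : b ∈ fixedLetters w) :
    (w.erase b).orderedInsert (· > ·) b = w :=
  (Finset.mem_filter.1 hb).2

theorem fixedLetters_subset_toFinset (w : List α) : fixedLetters w ⊆ w.toFinset :=
  Finset.filter_subset _ _

theorem mem_fixedLetters_cons {b x : α} {l : List α} (hx : x ∉ l) :
    b ∈ fixedLetters (x :: l) ↔ (b = x ∧ ∀ y ∈ l.head?, y < x) ∨ (b < x ∧ b ∈ fixedLetters l) := by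
  rcases eq_or_ne b x with rfl | hbx
  · cases l with
    | nil => simp [fixedLetters]
    | cons y l =>
      rw [fixedLetters, mem_filter, List.mem_toFinset, List.erase_cons_head,
        List.orderedInsert_cons]
      grind
  · rw [fixedLetters, mem_filter, List.mem_toFinset, List.erase_cons_tail (by simpa using hbx.symm),
      List.orderedInsert_cons, fixedLetters, mem_filter, List.mem_toFinset]
    grind

theorem fixedLetters_orderedInsert {a : α} {l : List α} (hl : l.Nodup) (ha : a ∉ l) :
    fixedLetters (l.orderedInsert (· > ·) a) = insert a (fixedLetters l) := by
  ext b
  induction l with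
  | nil =>
    rw [List.orderedInsert_nil, mem_fixedLetters_cons ha]
    simp [fixedLetters]
  | cons x l ih =>
    obtain ⟨hax, hal⟩ := not_or.1 (mt List.mem_cons.2 ha)
    obtain ⟨hxl, hl⟩ := List.nodup_cons.1 hl
    rcases lt_or_gt_of_ne hax with h | h
    · have hhead : (∀ y ∈ (l.orderedInsert (· > ·) a).head?, y < x) ↔ ∀ y ∈ l.head?, y < x := by
        cases l <;> grind
      have hx : x ∉ l.orderedInsert (· > ·) a := by simp [h.ne', hxl]
      rw [List.orderedInsert_cons, if_neg h.not_gt, mem_fixedLetters_cons hx, ih hl hal, hhead,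
        Finset.mem_insert, Finset.mem_insert, mem_fixedLetters_cons hxl]
      grind
    · rw [List.orderedInsert_cons, if_pos h, mem_fixedLetters_cons ha, Finset.mem_insert,
        mem_fixedLetters_cons hxl]
      grind

theorem cons_le_orderedInsert (a : α) (l : List α) : a :: l ≤ l.orderedInsert (· > ·) a := by
  induction l with
  | nil => rfl
  | cons x l ih =>
    rw [List.orderedInsert_cons]
    split_ifs with hxa
    · rfl
    · rcases (not_lt.1 hxa).eq_or_lt with rfl | hax
      · exact List.cons_le_cons a ih
      · exact le_of_lt (List.Lex.rel hax)

theorem le_orderedInsert_of_sublist {a : α} {l r : List α} (hperm : r ~ a :: l) (hsub : l <+ r) :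
    r ≤ l.orderedInsert (· > ·) a := by
  induction l generalizing r with
  | nil => simp [List.perm_singleton.1 hperm]
  | cons x l ih =>
    cases hsub with
    | @cons _ r y hsub =>
      obtain rfl : x :: l = r := hsub.eq_of_length (by simpa using hperm.length_eq.symm)
      obtain rfl : y = a := by
        simpa using (List.perm_append_right_iff (l₁ := [y]) (l₂ := [a]) (x :: l)).1 hperm
      exact cons_le_orderedInsert y (x :: l)
    | @cons_cons _ r _ hsub =>
      have hperm : r ~ a :: l := (hperm.trans (List.Perm.swap x a l)).cons_inv
      rw [List.orderedInsert_cons]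
      split_ifs with hxa
      · exact le_of_lt (List.Lex.rel hxa)
      · exact List.cons_le_cons x (ih hperm hsub)

end Lists

section Derangements

theorem sum_card_le_apply_card {α M : Type*} [Fintype α] [AddCommMonoid M] (f : ℕ → M) (k : ℕ) :
    ∑ C : Finset α with #C ≤ k, f #C = ∑ j ∈ range (k + 1), (Fintype.card α).choose j • f j := by
  rw [← Finset.sum_fiberwise_of_maps_to (t := range (k + 1)) (g := Finset.card)
    fun C hC => mem_range_succ_iff.2 (mem_filter.1 hC).2]
  refine Finset.sum_congr rfl fun j hj => ?_
  have hfiber : ({C | #C ≤ k} : Finset (Finset α)).filter (#· = j) = powersetCard j univ := by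
    ext C
    simp only [mem_filter, mem_univ, true_and, mem_powersetCard_univ]
    exact and_iff_right_of_imp fun hC => hC ▸ mem_range_succ_iff.1 hj
  rw [hfiber, Finset.sum_congr rfl fun C hC => congrArg f (mem_powersetCard.1 hC).2,
    Finset.sum_const, card_powersetCard, card_univ]

theorem card_perm_support_eq {α : Type*} [Fintype α] [DecidableEq α] (C : Finset α) :
    #{σ : Equiv.Perm α | σ.support = C} = numDerangements #C := by
  rw [← Fintype.card_coe C, ← card_derangements_eq_numDerangements,
    Fintype.card_congr (derangements.subtypeEquiv (· ∈ C)), Fintype.card_subtype]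
  congr! 2 with σ
  simp only [Finset.ext_iff, Equiv.Perm.mem_support, Function.mem_fixedPoints,
    Function.IsFixedPt]
  exact forall_congr' fun a => by tauto

theorem sum_choose_mul_numDerangements (m : ℕ) :
    ∑ j ∈ range (m + 1), m.choose j * numDerangements j = m.factorial := by
  calc ∑ j ∈ range (m + 1), m.choose j * numDerangements j
      = ∑ C : Finset (Fin m), numDerangements #C := by
        simpa using
          (Finset.sum_powerset_apply_card numDerangements (x := (univ : Finset (Fin m)))).symm
    _ = ∑ C : Finset (Fin m), #{σ : Equiv.Perm (Fin m) | σ.support = C} := by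
        simp only [card_perm_support_eq]
    _ = Fintype.card (Equiv.Perm (Fin m)) :=
        (Finset.card_eq_sum_card_fiberwise fun _ _ => mem_univ _).symm
    _ = m.factorial := by rw [Fintype.card_perm, Fintype.card_fin]

theorem sum_powerset_numDerangements {α : Type*} (A : Finset α) :
    ∑ C ∈ A.powerset, numDerangements #C = (#A).factorial := by
  simpa using (Finset.sum_powerset_apply_card numDerangements).trans
    (sum_choose_mul_numDerangements #A)

theorem eq_of_sum_powerset_eq {α M : Type*} [AddCommMonoid M] [IsCancelAdd M]
    {f g : Finset α → M} (h : ∀ A : Finset α, ∑ C ∈ A.powerset, f C = ∑ C ∈ A.powerset, g C) :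
    f = g := by
  classical
  funext A
  induction A using Finset.strongInduction with
  | H A ih =>
    have hproper : ∑ C ∈ A.ssubsets, f C = ∑ C ∈ A.ssubsets, g C :=
      Finset.sum_congr rfl fun C hC => ih C (Finset.mem_ssubsets.1 hC)
    have hA := h A
    rw [← Finset.sum_erase_add _ _ (Finset.mem_powerset_self A),
      ← Finset.sum_erase_add _ _ (Finset.mem_powerset_self A)] at hA
    exact add_left_cancel (hproper ▸ hA)

end Derangements

section Rankings

variable {n : ℕ}

theorem mem_rankings {A : Finset (Fin n)} {w : Word n} : w ∈ rankings n A ↔ IsRanking A w := by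
  rw [rankings, List.mem_toFinset, List.mem_permutations]
  constructor
  · intro h
    exact ⟨h.nodup_iff.2 A.nodup_toList, by rw [List.toFinset_eq_of_perm _ _ h, A.toList_toFinset]⟩
  · rintro ⟨hw, rfl⟩
    simp [List.perm_ext_iff_of_nodup hw (Finset.nodup_toList _)]

theorem mem_allWords {w : Word n} : w ∈ allWords n ↔ w.Nodup := by
  simp [allWords, mem_rankings, IsRanking]

theorem card_rankings (A : Finset (Fin n)) : #(rankings n A) = (#A).factorial := by
  rw [rankings, List.toFinset_card_of_nodup (List.nodup_permutations _ A.nodup_toList),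
    List.length_permutations, Finset.length_toList]

theorem IsRanking.length_eq {A : Finset (Fin n)} {w : Word n} (hw : IsRanking A w) :
    w.length = #A := by
  rw [← hw.2, List.toFinset_card_of_nodup hw.1]

theorem IsRanking.eq_of_sublist {A : Finset (Fin n)} {π σ : Word n} (hπ : IsRanking A π)
    (hσ : IsRanking A σ) (h : π <+ σ) : π = σ :=
  h.eq_of_length (hπ.length_eq.trans hσ.length_eq.symm)

theorem IsRanking.perm {A : Finset (Fin n)} {π σ : Word n} (hπ : IsRanking A π)
    (hσ : IsRanking A σ) : π ~ σ :=
  List.perm_of_nodup_nodup_toFinset_eq hπ.1 hσ.1 (hπ.2.trans hσ.2.symm)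

theorem isRanking_univ_iff {w : Word n} : IsRanking univ w ↔ w.Nodup ∧ w.length = n := by
  refine and_congr_right fun hw => ?_
  rw [← Finset.card_eq_iff_eq_univ, List.toFinset_card_of_nodup hw, Fintype.card_fin]

theorem IsRanking.erase {A : Finset (Fin n)} {w : Word n} (hw : IsRanking A w) (a : Fin n) :
    IsRanking (A.erase a) (w.erase a) := by
  refine ⟨hw.1.erase a, ?_⟩
  ext x
  simp [hw.1.mem_erase_iff, ← hw.2]

theorem IsRanking.orderedInsert {A : Finset (Fin n)} {w : Word n} (hw : IsRanking A w)
    {a : Fin n} (ha : a ∉ A) : IsRanking (insert a A) (w.orderedInsert (· > ·) a) := by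
  have hperm := List.perm_orderedInsert (· > ·) a w
  have haw : a ∉ w := by rwa [← List.mem_toFinset, hw.2]
  exact ⟨hperm.nodup_iff.2 (hw.1.cons haw), by
    rw [List.toFinset_eq_of_perm _ _ hperm, List.toFinset_cons, hw.2]⟩

theorem card_rankings_insert_filter_fixedLetters {A S : Finset (Fin n)} {a : Fin n} (haA : a ∉ A)
    (haS : a ∉ S) :
    #{w ∈ rankings n (insert a A) | fixedLetters w = insert a S} =
      #{w ∈ rankings n A | fixedLetters w = S} := by
  have notMem_of_mem {w : Word n} (hw : w ∈ rankings n A) : a ∉ w := by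
    rwa [← List.mem_toFinset, (mem_rankings.1 hw).2]
  have orderedInsert_erase {w : Word n} (hw : fixedLetters w = insert a S) :
      (w.erase a).orderedInsert (· > ·) a = w :=
    orderedInsert_erase_of_mem_fixedLetters (hw ▸ mem_insert_self a S)
  refine (Finset.card_nbij' (List.orderedInsert (· > ·) a) (List.erase · a) ?_ ?_ ?_ ?_).symm
  · intro w hw
    obtain ⟨hwA, hwS⟩ := mem_filter.1 hw
    have hw_ranking := mem_rankings.1 hwA
    exact mem_filter.2 ⟨mem_rankings.2 (hw_ranking.orderedInsert haA),
      by rw [fixedLetters_orderedInsert hw_ranking.1 (notMem_of_mem hwA), hwS]⟩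
  · intro w hw
    obtain ⟨hwA, hwS⟩ := mem_filter.1 hw
    have hwa_ranking : IsRanking A (w.erase a) := by
      simpa only [erase_insert haA] using (mem_rankings.1 hwA).erase a
    have hwa_mem := mem_rankings.2 hwa_ranking
    have hfixed : insert a (fixedLetters (w.erase a)) = insert a S := by
      rw [← fixedLetters_orderedInsert hwa_ranking.1 (notMem_of_mem hwa_mem),
        orderedInsert_erase hwS, hwS]
    refine mem_filter.2 ⟨hwa_mem, ?_⟩
    rw [← erase_insert haS, ← hfixed, erase_insert]
    exact fun h => notMem_of_mem hwa_mem (List.mem_toFinset.1 (fixedLetters_subset_toFinset _ h))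
  · intro w hw
    exact List.erase_orderedInsert_of_notMem (notMem_of_mem (mem_filter.1 hw).1)
  · intro w hw
    exact orderedInsert_erase (mem_filter.1 hw).2

theorem card_rankings_union_filter_fixedLetters {C S : Finset (Fin n)} (h : Disjoint C S) :
    #{w ∈ rankings n (C ∪ S) | fixedLetters w = S} = #{w ∈ rankings n C | fixedLetters w = ∅} := by
  induction S using Finset.induction_on with
  | empty => rw [union_empty]
  | insert a S ha ih =>
    obtain ⟨haC, hCS⟩ := Finset.disjoint_insert_right.1 h
    rw [union_insert, card_rankings_insert_filter_fixedLetters (by simp [haC, ha]) ha, ih hCS]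

theorem sum_powerset_card_rankings_filter_fixedLetters (A : Finset (Fin n)) :
    ∑ C ∈ A.powerset, #{w ∈ rankings n C | fixedLetters w = ∅} = (#A).factorial := by
  rw [← card_rankings, Finset.card_eq_sum_card_fiberwise (f := fun w => A \ fixedLetters w)
    (t := A.powerset) fun w _ => by simp]
  refine Finset.sum_congr rfl fun C hC => ?_
  rw [mem_powerset] at hC
  rw [← card_rankings_union_filter_fixedLetters (S := A \ C) disjoint_sdiff,
    union_sdiff_of_subset hC]
  congr 1
  refine Finset.filter_congr fun w hw => ?_
  have hfixed : fixedLetters w ⊆ A := (mem_rankings.1 hw).2 ▸ fixedLetters_subset_toFinset w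
  grind

theorem card_rankings_filter_fixedLetters_eq_empty (A : Finset (Fin n)) :
    #{w ∈ rankings n A | fixedLetters w = ∅} = numDerangements #A := by
  refine congrFun (eq_of_sum_powerset_eq (f := fun A => #{w ∈ rankings n A | fixedLetters w = ∅})
    (g := fun A => numDerangements #A) fun A => ?_) A
  rw [sum_powerset_card_rankings_filter_fixedLetters, sum_powerset_numDerangements]

/-- The duplicate-free words of length at most `k` that correspond to derangements of their sets of
letters. Their indicators will form a basis of `V^k`. -/
noncomputable def derangementWords (n k : ℕ) : Finset (Word n) :=
  {w ∈ allWords n | w.length ≤ k ∧ fixedLetters w = ∅}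

theorem mem_derangementWords {k : ℕ} {w : Word n} :
    w ∈ derangementWords n k ↔ w.Nodup ∧ w.length ≤ k ∧ fixedLetters w = ∅ := by
  rw [derangementWords, mem_filter, mem_allWords]

theorem derangementWords_mono : Monotone (derangementWords n) := by
  intro j k hjk w hw
  rw [mem_derangementWords] at hw ⊢
  exact ⟨hw.1, hw.2.1.trans hjk, hw.2.2⟩

theorem card_derangementWords (n k : ℕ) :
    #(derangementWords n k) = ∑ j ∈ range (k + 1), n.choose j * numDerangements j := by
  have card_toFinset_fiber {C : Finset (Fin n)} (hC : #C ≤ k) :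
      #{w ∈ derangementWords n k | w.toFinset = C} = numDerangements #C := by
    rw [← card_rankings_filter_fixedLetters_eq_empty]
    congr 1
    ext w
    simp only [mem_filter, mem_derangementWords, mem_rankings]
    refine ⟨fun ⟨⟨hw, _, hfixed⟩, hwC⟩ => ⟨⟨hw, hwC⟩, hfixed⟩, fun ⟨hw, hfixed⟩ => ?_⟩
    exact ⟨⟨hw.1, hw.length_eq.trans_le hC, hfixed⟩, hw.2⟩
  calc #(derangementWords n k)
      = ∑ C : Finset (Fin n) with #C ≤ k, #{w ∈ derangementWords n k | w.toFinset = C} := by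
        refine Finset.card_eq_sum_card_fiberwise fun w hw => ?_
        obtain ⟨-, hlen, -⟩ := mem_derangementWords.1 hw
        simpa using w.toFinset_card_le.trans hlen
    _ = ∑ C : Finset (Fin n) with #C ≤ k, numDerangements #C :=
        Finset.sum_congr rfl fun C hC => card_toFinset_fiber (mem_filter.1 hC).2
    _ = ∑ j ∈ range (k + 1), n.choose j * numDerangements j := by
        simpa only [Fintype.card_fin, smul_eq_mul] using
          sum_card_le_apply_card (α := Fin n) numDerangements k

end Rankings

section LinearAlgebra

variable {n : ℕ}

theorem sublist_restrictWord_iff {π σ : Word n} {B : Finset (Fin n)} (hB : π.toFinset ⊆ B) :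
    π <+ restrictWord σ B ↔ π <+ σ := by
  refine ⟨fun h => h.trans List.filter_sublist, fun h => ?_⟩
  have hπ : restrictWord π B = π := List.filter_eq_self.2 fun a ha => by
    simpa using hB (List.mem_toFinset.2 ha)
  exact hπ ▸ h.filter _

theorem isRanking_restrictWord {A B : Finset (Fin n)} {σ : Word n} (hσ : IsRanking A σ)
    (hB : B ⊆ A) : IsRanking B (restrictWord σ B) := by
  refine ⟨hσ.1.filter _, ?_⟩
  rw [restrictWord, List.toFinset_filter, hσ.2]
  simpa only [decide_eq_true_eq, Finset.filter_mem_eq_inter, inter_eq_right] using hB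

theorem IsRanking.sublist_iff_eq_restrictWord {A B : Finset (Fin n)} {ρ σ : Word n}
    (hρ : IsRanking B ρ) (hσ : IsRanking A σ) (hB : B ⊆ A) :
    ρ <+ σ ↔ ρ = restrictWord σ B := by
  rw [← sublist_restrictWord_iff hρ.2.subset]
  exact ⟨hρ.eq_of_sublist (isRanking_restrictWord hσ hB), fun h => h ▸ List.Sublist.refl _⟩

theorem linextInd_eq_sum {π : Word n} {B : Finset (Fin n)} (hB : π.toFinset ⊆ B) :
    linextInd π = ∑ ρ ∈ rankings n B with π <+ ρ, linextInd ρ := by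
  funext σ
  rw [Finset.sum_apply]
  by_cases hσ : IsRanking univ σ
  · have hsum : ∑ ρ ∈ rankings n B with π <+ ρ, linextInd ρ σ =
        ∑ ρ ∈ rankings n B with π <+ ρ, if ρ = restrictWord σ B then 1 else 0 :=
      Finset.sum_congr rfl fun ρ hρ => by
        have hρ := mem_rankings.1 (mem_filter.1 hρ).1
        simp [linextInd, hσ, hρ.sublist_iff_eq_restrictWord hσ (subset_univ B)]
    rw [hsum, Finset.sum_ite_eq']
    simp [linextInd, hσ, mem_rankings, isRanking_restrictWord hσ (subset_univ B),
      sublist_restrictWord_iff hB]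
  · simp [linextInd, hσ]

theorem linextInd_mem_Vspace {π : Word n} (hπ : π.Nodup) {k : ℕ} (hk : π.length ≤ k)
    (hkn : k ≤ n) : linextInd π ∈ Vspace n k := by
  obtain ⟨B, hB, hBk⟩ : ∃ B, π.toFinset ⊆ B ∧ #B = k :=
    Finset.exists_superset_card_eq (by rwa [List.toFinset_card_of_nodup hπ]) (by simpa using hkn)
  rw [linextInd_eq_sum hB]
  refine Submodule.sum_mem _ fun ρ hρ => Submodule.subset_span ⟨ρ, ?_, rfl⟩
  have hρ := mem_rankings.1 (mem_filter.1 hρ).1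
  exact ⟨hρ.1, hρ.length_eq.trans hBk⟩

theorem Vspace_mono {j k : ℕ} (hjk : j ≤ k) (hkn : k ≤ n) : Vspace n j ≤ Vspace n k := by
  refine Submodule.span_le.2 ?_
  rintro _ ⟨π, ⟨hπ, hlen⟩, rfl⟩
  exact linextInd_mem_Vspace hπ (hlen.trans_le hjk) hkn

theorem shortlex_of_erase_sublist {b : Fin n} {π ρ : Word n} (hb : b ∈ fixedLetters π)
    (hperm : ρ ~ π) (hsub : π.erase b <+ ρ) (hne : ρ ≠ π) : List.Shortlex (· < ·) ρ π := by
  have hbπ : b ∈ π := List.mem_toFinset.1 (fixedLetters_subset_toFinset π hb)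
  have hle := le_orderedInsert_of_sublist (hperm.trans (List.perm_cons_erase hbπ)) hsub
  rw [orderedInsert_erase_of_mem_fixedLetters hb] at hle
  exact List.Shortlex.of_lex hperm.length_eq (hle.lt_of_ne hne)

theorem linextInd_mem_span_derangementWords {π : Word n} (hπ : π.Nodup) {k : ℕ}
    (hk : π.length ≤ k) :
    linextInd π ∈ Submodule.span ℝ (linextInd '' derangementWords n k) := by
  induction π using (List.Shortlex.wf (wellFounded_lt (α := Fin n))).induction with
  | _ π ih =>
  rcases (fixedLetters π).eq_empty_or_nonempty with hfixed | ⟨b, hb⟩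
  · exact Submodule.subset_span ⟨π, mem_derangementWords.2 ⟨hπ, hk, hfixed⟩, rfl⟩
  have hbπ : b ∈ π := List.mem_toFinset.1 (fixedLetters_subset_toFinset π hb)
  have hlen : (π.erase b).length < π.length := by
    rw [List.length_erase_of_mem hbπ]
    exact Nat.sub_lt (List.length_pos_of_mem hbπ) one_pos
  have herase : (π.erase b).toFinset ⊆ π.toFinset := fun x hx =>
    List.mem_toFinset.2 (List.mem_of_mem_erase (List.mem_toFinset.1 hx))
  have hrel : linextInd π = linextInd (π.erase b) -
      ∑ ρ ∈ ({ρ ∈ rankings n π.toFinset | π.erase b <+ ρ} : Finset (Word n)).erase π,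
        linextInd ρ := by
    rw [linextInd_eq_sum herase, eq_sub_iff_add_eq]
    exact Finset.add_sum_erase _ _ (by simp [mem_rankings, IsRanking, hπ, List.erase_sublist])
  rw [hrel]
  refine Submodule.sub_mem _ (ih _ (.of_length_lt hlen) (hπ.erase b) (hlen.le.trans hk))
    (Submodule.sum_mem _ fun ρ hρ => ?_)
  obtain ⟨hne, hρ⟩ := mem_erase.1 hρ
  obtain ⟨hρ, hsub⟩ := mem_filter.1 hρ
  have hperm : ρ ~ π := (mem_rankings.1 hρ).perm ⟨hπ, rfl⟩
  exact ih ρ (shortlex_of_erase_sublist hb hperm hsub hne) (hperm.nodup_iff.2 hπ)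
    (hperm.length_eq.trans_le hk)

theorem Vspace_eq_span_derangementWords {k : ℕ} (hkn : k ≤ n) :
    Vspace n k = Submodule.span ℝ (linextInd '' derangementWords n k) := by
  refine le_antisymm (Submodule.span_le.2 ?_) (Submodule.span_le.2 ?_)
  · rintro _ ⟨π, ⟨hπ, hlen⟩, rfl⟩
    exact linextInd_mem_span_derangementWords hπ hlen.le
  · rintro _ ⟨π, hπ, rfl⟩
    obtain ⟨hπ, hlen, -⟩ := mem_derangementWords.1 hπ
    exact linextInd_mem_Vspace hπ hlen hkn

theorem linextInd_eq_single {π : Word n} (hπ : IsRanking univ π) : linextInd π = Pi.single π 1 := by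
  funext σ
  rw [linextInd, Pi.single_apply]
  congr 1
  refine propext ⟨fun ⟨hσ, h⟩ => (hπ.eq_of_sublist hσ h).symm, ?_⟩
  rintro rfl
  exact ⟨hπ, List.Sublist.refl _⟩

theorem Lspace_eq_span_single (n : ℕ) : Lspace n =
    Submodule.span ℝ ((fun π : Word n => Pi.single π (1 : ℝ)) '' rankings n univ) := by
  refine le_antisymm (fun F hF => ?_) (Submodule.span_le.2 ?_)
  · have hsum : F = ∑ π ∈ rankings n univ, F π • Pi.single π (1 : ℝ) := by
      funext σ
      simp only [Finset.sum_apply, Pi.smul_apply, Pi.single_apply, smul_eq_mul, mul_ite, mul_one,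
        mul_zero, Finset.sum_ite_eq]
      split_ifs with hσ
      · rfl
      · exact not_not.1 fun h => hσ (mem_rankings.2 (hF σ h))
    rw [hsum]
    exact Submodule.sum_mem _ fun π hπ =>
      Submodule.smul_mem _ _ (Submodule.subset_span (Set.mem_image_of_mem _ hπ))
  · rintro _ ⟨π, hπ, rfl⟩ σ hσ
    obtain rfl : σ = π := not_not.1 fun h => hσ (Pi.single_eq_of_ne h 1)
    exact mem_rankings.1 hπ

theorem finrank_Lspace (n : ℕ) : Module.finrank ℝ (Lspace n) = n.factorial := by
  have hindep : LinearIndepOn ℝ (fun π : Word n => Pi.single π (1 : ℝ))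
      (rankings n univ : Set (Word n)) :=
    (Pi.linearIndependent_single_one (Word n) ℝ).linearIndepOn _
  rw [Lspace_eq_span_single, Set.image_eq_range, finrank_span_eq_card hindep]
  simp [card_rankings]

theorem Vspace_self (n : ℕ) : Vspace n n = Lspace n := by
  have hset : {π : Word n | π.Nodup ∧ π.length = n} = rankings n univ := by
    ext π
    rw [Set.mem_ofPred_eq, mem_coe, mem_rankings, isRanking_univ_iff]
  rw [Vspace, Lspace_eq_span_single, hset]
  exact congrArg _ (Set.image_congr fun π hπ => linextInd_eq_single (mem_rankings.1 hπ))

theorem linearIndepOn_linextInd_derangementWords (n : ℕ) :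
    LinearIndepOn ℝ linextInd (derangementWords n n : Set (Word n)) := by
  refine linearIndependent_iff_card_eq_finrank_span.2 ?_
  rw [Set.finrank, ← Set.image_eq_range, ← Vspace_eq_span_derangementWords le_rfl, Vspace_self,
    finrank_Lspace, ← sum_choose_mul_numDerangements, ← card_derangementWords]
  exact Fintype.card_coe _

theorem finrank_Vspace_eq_sum {k : ℕ} (hkn : k ≤ n) : Module.finrank ℝ (Vspace n k) =
    ∑ j ∈ range (k + 1), n.choose j * numDerangements j := by
  have hindep : LinearIndepOn ℝ linextInd (derangementWords n k : Set (Word n)) :=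
    (linearIndepOn_linextInd_derangementWords n).mono (derangementWords_mono hkn)
  rw [Vspace_eq_span_derangementWords hkn, Set.image_eq_range, finrank_span_eq_card hindep,
    ← card_derangementWords]
  exact Fintype.card_coe _

end LinearAlgebra

/-- **Dimension of the span of indicators of linear extensions:**
`dim V^k = Σ_{j=0}^{k} C(n,j)·d_j`; moreover `V^n = L(Γ([n]))` and `V^{k-1} ⊆ V^k`. -/
theorem finrank_Vspace {n : ℕ} (hn : 2 ≤ n) (k : ℕ) (hk2 : 2 ≤ k) (hkn : k ≤ n) :
    Module.finrank ℝ (Vspace n k) =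
        ∑ j ∈ Finset.range (k + 1), Nat.choose n j * numDerangements j ∧
      Vspace n n = Lspace n ∧
      (3 ≤ k → Vspace n (k - 1) ≤ Vspace n k) := by
  exact ⟨finrank_Vspace_eq_sum hkn, Vspace_self n, fun _ => Vspace_mono (Nat.sub_le k 1) hkn⟩
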